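/- arXiv:1707.03287 — 3 statements merged into one kernel-verified Lean document; each statement's English description precedes it below -/
import Mathlib

section
/- Let I ⊆ ℝ be an open interval, let q : ℝ → ℝ be continuous on I, and let α : ℝ → ℝ be three times continuously differentiable on I with α'(t) ≠ 0 for all t ∈ I. Define u(t) = cos(α(t))/√|α'(t)| and v(t) = sin(α(t))/√|α'(t)|. Then u and v both satisfy the differential equation y''(t) + q(t)·y(t) = 0 for all t ∈ I if and only if α' satisfies Kummer's equation q(t) − (α'(t))² − (1/2)·α'''(t)/α'(t) + (3/4)·(α''(t)/α'(t))² = 0 for all t ∈ I. -/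
/-!
For `w = |α'| ^ (-1/2)` the identity `2 w' α' + w α'' = 0` removes the `f' ∘ α` term from the second
derivative of `y = w • f ∘ α`, leaving `y'' = w • (α' ^ 2 • f'' ∘ α - (S / 2) • f ∘ α)` with `S` the
Schwarzian derivative of `α`. When `f'' = -f` this gives `y'' + q • y = (q - α' ^ 2 - S / 2) • y`,
and `cos` and `sin` have no common zero, so both phase functions solve the equation exactly when
the factor in front vanishes.
-/

open Filter Real Topology

/-- The Schwarzian derivative of `α`. Kummer's equation for the phase `α` says that the coefficient
`q` equals `α' ^ 2 + schwarzian α / 2`. -/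
noncomputable def schwarzian (α : ℝ → ℝ) (t : ℝ) : ℝ :=
  deriv (deriv (deriv α)) t / deriv α t - 3 / 2 * (deriv (deriv α) t / deriv α t) ^ 2

/-- The amplitude `|α'| ^ (-1/2)` accompanying the phase `α` in the Liouville transformation
`f ↦ |α'| ^ (-1/2) • f ∘ α`; it takes the junk value `0` where `α'` vanishes. -/
noncomputable def phaseAmplitude (α : ℝ → ℝ) (t : ℝ) : ℝ :=
  (√|deriv α t|)⁻¹

theorem hasDerivAt_inv_sqrt_abs {x : ℝ} (hx : x ≠ 0) :
    HasDerivAt (fun y => (√|y|)⁻¹) (-(√|x|)⁻¹ / (2 * x)) x := by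
  have habs : |x| ≠ 0 := abs_ne_zero.mpr hx
  have hsqrt : √|x| ≠ 0 := (sqrt_ne_zero (abs_nonneg x)).mpr habs
  refine (((hasDerivAt_abs hx).sqrt habs).inv hsqrt).congr_deriv ?_
  have hsign : (SignType.sign x : ℝ) * x = √|x| ^ 2 := by
    rw [sign_mul_self, sq_sqrt (abs_nonneg x)]
  field_simp
  linear_combination -hsign

section PhaseAmplitude

variable {α : ℝ → ℝ} {t : ℝ}

theorem phaseAmplitude_ne_zero (h0 : deriv α t ≠ 0) : phaseAmplitude α t ≠ 0 :=
  inv_ne_zero ((sqrt_ne_zero (abs_nonneg _)).mpr (abs_ne_zero.mpr h0))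

theorem hasDerivAt_phaseAmplitude (hα : DifferentiableAt ℝ (deriv α) t) (h0 : deriv α t ≠ 0) :
    HasDerivAt (phaseAmplitude α)
      (-(1 / 2) * (deriv (deriv α) t / deriv α t) * phaseAmplitude α t) t := by
  refine ((hasDerivAt_inv_sqrt_abs h0).comp t hα.hasDerivAt).congr_deriv ?_
  simp only [phaseAmplitude]
  field_simp

theorem two_mul_deriv_phaseAmplitude_mul_add (hα : DifferentiableAt ℝ (deriv α) t)
    (h0 : deriv α t ≠ 0) :
    2 * deriv (phaseAmplitude α) t * deriv α t + phaseAmplitude α t * deriv (deriv α) t = 0 := by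
  rw [(hasDerivAt_phaseAmplitude hα h0).deriv]
  field_simp
  ring

theorem hasDerivAt_deriv_phaseAmplitude (hα : ∀ᶠ s in 𝓝 t, DifferentiableAt ℝ (deriv α) s)
    (hα₂ : DifferentiableAt ℝ (deriv (deriv α)) t) (h0 : deriv α t ≠ 0) :
    HasDerivAt (deriv (phaseAmplitude α)) (-(1 / 2) * schwarzian α t * phaseAmplitude α t) t := by
  have hαt := hα.self_of_nhds
  have hderiv : deriv (phaseAmplitude α) =ᶠ[𝓝 t]
      fun s => -(1 / 2) * (deriv (deriv α) s / deriv α s) * phaseAmplitude α s := by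
    filter_upwards [hα, hαt.continuousAt.eventually_ne h0] with s hs hs0
    exact (hasDerivAt_phaseAmplitude hs hs0).deriv
  have hlogDeriv := (hα₂.hasDerivAt.fun_div hαt.hasDerivAt h0).const_mul (-(1 / 2))
  refine ((hlogDeriv.fun_mul (hasDerivAt_phaseAmplitude hαt h0)).congr_of_eventuallyEq
    hderiv).congr_deriv ?_
  simp only [schwarzian]
  field_simp
  ring

end PhaseAmplitude

section LiouvilleTransformation

variable {E : Type*} [NormedAddCommGroup E] [NormedSpace ℝ E] {f : ℝ → E} {α : ℝ → ℝ} {t : ℝ}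

theorem hasDerivAt_phaseAmplitude_smul_comp (hα : DifferentiableAt ℝ (deriv α) t)
    (h0 : deriv α t ≠ 0) (hf : DifferentiableAt ℝ f (α t)) :
    HasDerivAt (fun s => phaseAmplitude α s • f (α s))
      ((phaseAmplitude α t * deriv α t) • deriv f (α t) +
        deriv (phaseAmplitude α) t • f (α t)) t := by
  have hw := (hasDerivAt_phaseAmplitude hα h0).differentiableAt.hasDerivAt
  have hfα := hf.hasDerivAt.scomp t (differentiableAt_of_deriv_ne_zero h0).hasDerivAt
  simpa only [Function.comp_apply, smul_smul] using hw.fun_smul hfα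

theorem hasDerivAt_deriv_phaseAmplitude_smul_comp
    (hα : ∀ᶠ s in 𝓝 t, DifferentiableAt ℝ (deriv α) s)
    (hα₂ : DifferentiableAt ℝ (deriv (deriv α)) t) (h0 : deriv α t ≠ 0)
    (hf : ∀ᶠ x in 𝓝 (α t), DifferentiableAt ℝ f x)
    (hf' : DifferentiableAt ℝ (deriv f) (α t)) :
    HasDerivAt (deriv fun s => phaseAmplitude α s • f (α s))
      (phaseAmplitude α t •
        (deriv α t ^ 2 • deriv (deriv f) (α t) - (schwarzian α t / 2) • f (α t))) t := by
  have hαt := hα.self_of_nhds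
  have hphase := (differentiableAt_of_deriv_ne_zero h0).hasDerivAt
  have hderiv : deriv (fun s => phaseAmplitude α s • f (α s)) =ᶠ[𝓝 t]
      fun s => (phaseAmplitude α s * deriv α s) • deriv f (α s) +
        deriv (phaseAmplitude α) s • f (α s) := by
    filter_upwards [hα, hαt.continuousAt.eventually_ne h0, hphase.continuousAt.eventually hf]
      with s hs hs0 hfs
    exact (hasDerivAt_phaseAmplitude_smul_comp hs hs0 hfs).deriv
  have hw := (hasDerivAt_phaseAmplitude hαt h0).differentiableAt.hasDerivAt
  have hw' := hasDerivAt_deriv_phaseAmplitude hα hα₂ h0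
  have hfα := hf.self_of_nhds.hasDerivAt.scomp t hphase
  have hf'α := hf'.hasDerivAt.scomp t hphase
  refine ((((hw.fun_mul hαt.hasDerivAt).fun_smul hf'α).fun_add
    (hw'.fun_smul hfα)).congr_of_eventuallyEq hderiv).congr_deriv ?_
  simp only [Function.comp_apply]
  linear_combination (norm := module)
    two_mul_deriv_phaseAmplitude_mul_add hαt h0 • deriv f (α t)

theorem deriv_deriv_phaseAmplitude_smul_comp_add_smul
    (hα : ∀ᶠ s in 𝓝 t, DifferentiableAt ℝ (deriv α) s)
    (hα₂ : DifferentiableAt ℝ (deriv (deriv α)) t) (h0 : deriv α t ≠ 0)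
    (hf : ∀ᶠ x in 𝓝 (α t), DifferentiableAt ℝ f x)
    (hf' : HasDerivAt (deriv f) (-f (α t)) (α t)) (c : ℝ) :
    deriv (deriv fun s => phaseAmplitude α s • f (α s)) t + c • phaseAmplitude α t • f (α t) =
      (c - deriv α t ^ 2 - schwarzian α t / 2) • phaseAmplitude α t • f (α t) := by
  rw [(hasDerivAt_deriv_phaseAmplitude_smul_comp hα hα₂ h0 hf hf'.differentiableAt).deriv,
    hf'.deriv]
  module

end LiouvilleTransformation

theorem mul_cos_eq_zero_and_mul_sin_eq_zero_iff {k x : ℝ} :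
    k * cos x = 0 ∧ k * sin x = 0 ↔ k = 0 := by
  refine ⟨fun ⟨hcos, hsin⟩ => ?_, fun hk => by simp [hk]⟩
  linear_combination cos x * hcos + sin x * hsin - k * sin_sq_add_cos_sq x

theorem hasDerivAt_deriv_cos (x : ℝ) : HasDerivAt (deriv cos) (-cos x) x := by
  simpa only [deriv_cos'] using (hasDerivAt_sin x).fun_neg

theorem hasDerivAt_deriv_sin (x : ℝ) : HasDerivAt (deriv sin) (-sin x) x := by
  simpa only [Real.deriv_sin] using hasDerivAt_cos x

theorem phaseAmplitude_smul_cos_and_sin_solve_iff {α : ℝ → ℝ} {t : ℝ}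
    (hα : ∀ᶠ s in 𝓝 t, DifferentiableAt ℝ (deriv α) s)
    (hα₂ : DifferentiableAt ℝ (deriv (deriv α)) t) (h0 : deriv α t ≠ 0) (c : ℝ) :
    (deriv (deriv fun s => phaseAmplitude α s • cos (α s)) t +
        c • phaseAmplitude α t • cos (α t) = 0 ∧
      deriv (deriv fun s => phaseAmplitude α s • sin (α s)) t +
        c • phaseAmplitude α t • sin (α t) = 0) ↔
    c - deriv α t ^ 2 - schwarzian α t / 2 = 0 := by
  rw [deriv_deriv_phaseAmplitude_smul_comp_add_smul hα hα₂ h0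
      (.of_forall fun _ => differentiableAt_cos) (hasDerivAt_deriv_cos _),
    deriv_deriv_phaseAmplitude_smul_comp_add_smul hα hα₂ h0
      (.of_forall fun _ => differentiableAt_sin) (hasDerivAt_deriv_sin _)]
  simp only [smul_eq_mul, ← mul_assoc]
  rw [mul_cos_eq_zero_and_mul_sin_eq_zero_iff, mul_eq_zero_iff_right (phaseAmplitude_ne_zero h0)]

theorem kummer_iff_phase_general {s : Set ℝ} (hs : IsOpen s) {q α u v : ℝ → ℝ}
    (hα : DifferentiableOn ℝ (deriv α) s) (hα₂ : DifferentiableOn ℝ (deriv (deriv α)) s)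
    (hα' : ∀ t ∈ s, deriv α t ≠ 0)
    (hu : ∀ t, u t = cos (α t) / √|deriv α t|)
    (hv : ∀ t, v t = sin (α t) / √|deriv α t|) :
    ((∀ t ∈ s, deriv (deriv u) t + q t * u t = 0) ∧
      (∀ t ∈ s, deriv (deriv v) t + q t * v t = 0)) ↔
    (∀ t ∈ s,
      q t - (deriv α t) ^ 2
        - (1 / 2) * (deriv (deriv (deriv α)) t / deriv α t)
        + (3 / 4) * (deriv (deriv α) t / deriv α t) ^ 2 = 0) := by
  obtain rfl : u = fun t => phaseAmplitude α t • cos (α t) :=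
    funext fun t => (hu t).trans (div_eq_inv_mul _ _)
  obtain rfl : v = fun t => phaseAmplitude α t • sin (α t) :=
    funext fun t => (hv t).trans (div_eq_inv_mul _ _)
  rw [← forall₂_and]
  refine forall₂_congr fun t ht => (phaseAmplitude_smul_cos_and_sin_solve_iff
    (hα.eventually_differentiableAt (hs.mem_nhds ht)) (hα₂.differentiableAt (hs.mem_nhds ht))
    (hα' t ht) (q t)).trans (Eq.congr_left ?_)
  rw [schwarzian]
  ring

/-- Kummer's equation characterizes phase functions: with
`u(t) = cos(α(t))/√|α'(t)|` and `v(t) = sin(α(t))/√|α'(t)|`, both `u` and `v`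
solve `y'' + q·y = 0` on the open interval `(a,b)` iff `α'` satisfies
Kummer's equation there. -/
theorem kummer_iff_phase (a b : ℝ) (q α u v : ℝ → ℝ)
    (hq : ContinuousOn q (Set.Ioo a b))
    (hα : ContDiffOn ℝ 3 α (Set.Ioo a b))
    (hα' : ∀ t ∈ Set.Ioo a b, deriv α t ≠ 0)
    (hu : ∀ t, u t = Real.cos (α t) / Real.sqrt |deriv α t|)
    (hv : ∀ t, v t = Real.sin (α t) / Real.sqrt |deriv α t|) :
    ((∀ t ∈ Set.Ioo a b, deriv (deriv u) t + q t * u t = 0) ∧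
      (∀ t ∈ Set.Ioo a b, deriv (deriv v) t + q t * v t = 0)) ↔
    (∀ t ∈ Set.Ioo a b,
      q t - (deriv α t) ^ 2
        - (1 / 2) * (deriv (deriv (deriv α)) t / deriv α t)
        + (3 / 4) * (deriv (deriv α) t / deriv α t) ^ 2 = 0) := by
  have hα₁ : ContDiffOn ℝ 2 (deriv α) (Set.Ioo a b) := hα.deriv_of_isOpen isOpen_Ioo (by norm_num)
  exact kummer_iff_phase_general isOpen_Ioo (hα₁.differentiableOn (by norm_num))
    ((hα₁.deriv_of_isOpen isOpen_Ioo (by norm_num)).differentiableOn one_ne_zero) hα' hu hv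
end

section
/- Let I ⊆ ℝ be an open interval, let q : ℝ → ℝ be continuous on I, and let u, v : ℝ → ℝ be twice continuously differentiable solutions of y''(t) + q(t)·y(t) = 0 on I whose Wronskian u(t)·v'(t) − v(t)·u'(t) is equal to a constant W > 0 for all t ∈ I. Then there exists a continuously differentiable function α : ℝ → ℝ such that for all t ∈ I: α'(t) = W/((u(t))² + (v(t))²) > 0, u(t) = √W · cos(α(t))/√(α'(t)), and v(t) = √W · sin(α(t))/√(α'(t)). -/
/-!
View the pair `(u, v)` as the curve `z = u + i v` in the punctured plane. The imaginary part of
`z' / z` is the Wronskian divided by `u² + v²`, so an antiderivative `α` of that quotient is the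
imaginary part of a logarithm `log ‖z‖ + i α` of the curve, up to a constant that is fixed by
starting `α` at `arg z`. Taking real and imaginary parts of `z = ‖z‖ exp (i α)` gives the formulas
for `u` and `v`, with the amplitude `√(u² + v²) = √W / √α'`.
-/

section Antiderivative

variable {E : Type*} [NormedAddCommGroup E]

lemma exists_forall_hasDerivAt_of_continuousOn [NormedSpace ℝ E] [CompleteSpace E] {s : Set ℝ}
    {f : ℝ → E} {c : ℝ} (hs : IsOpen s) (hsc : IsPreconnected s) (hf : ContinuousOn f s)
    (hc : c ∈ s) (y : E) :
    ∃ F : ℝ → E, F c = y ∧ ∀ t ∈ s, HasDerivAt F (f t) t := by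
  refine ⟨fun t ↦ y + ∫ x in c..t, f x, by simp, fun t ht ↦ ?_⟩
  have hint : IntervalIntegrable f MeasureTheory.volume c t :=
    (hf.mono (hsc.ordConnected.uIcc_subset hc ht)).intervalIntegrable
  exact (intervalIntegral.integral_hasDerivAt_right hint
    (hf.stronglyMeasurableAtFilter hs t ht) (hf.continuousAt (hs.mem_nhds ht))).const_add y

lemma contDiffOn_one_of_hasDerivAt {𝕜 : Type*} [NontriviallyNormedField 𝕜] [NormedSpace 𝕜 E]
    {s : Set 𝕜} {f f' : 𝕜 → E} (hs : IsOpen s) (hf : ∀ t ∈ s, HasDerivAt f (f' t) t)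
    (hf' : ContinuousOn f' s) : ContDiffOn 𝕜 1 f s :=
  (contDiffOn_one_iff_derivWithin hs.uniqueDiffOn).2
    ⟨fun t ht ↦ (hf t ht).differentiableAt.differentiableWithinAt,
      hf'.congr fun t ht ↦ (hf t ht).hasDerivWithinAt.derivWithin (hs.uniqueDiffWithinAt ht)⟩

end Antiderivative

section Logarithm

open Complex

lemma hasDerivAt_log_norm {z : ℝ → ℂ} {w : ℂ} {t : ℝ} (hz : HasDerivAt z w t) (h0 : z t ≠ 0) :
    HasDerivAt (fun x ↦ Real.log ‖z x‖) (w / z t).re t := by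
  have hlog : HasDerivAt (fun x ↦ Real.log (‖z x‖ ^ 2) / 2)
      (2 * inner ℝ (z t) w / ‖z t‖ ^ 2 / 2) t :=
    (hz.norm_sq.log (pow_ne_zero 2 (norm_ne_zero_iff.2 h0))).div_const 2
  have hre : 2 * inner ℝ (z t) w / ‖z t‖ ^ 2 / 2 = (w / z t).re := by
    rw [Complex.inner, div_re, ← normSq_eq_norm_sq, mul_re, conj_re, conj_im]
    ring
  simpa only [hre, Real.log_pow, Nat.cast_ofNat, mul_div_cancel_left₀ _ (two_ne_zero' ℝ)] using hlog

lemma eqOn_exp_of_hasDerivAt_div {𝕜 : Type*} [NontriviallyNormedField 𝕜]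
    [IsRCLikeNormedField 𝕜] [NormedAlgebra 𝕜 ℂ] {s : Set 𝕜} {z z' L : 𝕜 → ℂ} {c : 𝕜}
    (hs : IsOpen s) (hsc : IsPreconnected s) (hz : ∀ t ∈ s, HasDerivAt z (z' t) t)
    (h0 : ∀ t ∈ s, z t ≠ 0) (hL : ∀ t ∈ s, HasDerivAt L (z' t / z t) t) (hc : c ∈ s)
    (hLc : exp (L c) = z c) :
    s.EqOn z fun t ↦ exp (L t) := by
  have hexp (t : 𝕜) (ht : t ∈ s) := (hL t ht).cexp
  have hlogDeriv : s.EqOn (logDeriv z) (logDeriv fun t ↦ exp (L t)) := fun t ht ↦ by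
    rw [logDeriv_apply, logDeriv_apply, (hz t ht).deriv, (hexp t ht).deriv,
      mul_div_cancel_left₀ _ (exp_ne_zero _)]
  obtain ⟨k, -, hk⟩ := (logDeriv_eqOn_iff
    (fun t ht ↦ (hz t ht).differentiableAt.differentiableWithinAt)
    (fun t ht ↦ (hexp t ht).differentiableAt.differentiableWithinAt) hs hsc
    (fun _ _ ↦ exp_ne_zero _) h0).1 hlogDeriv
  have hk1 : k = 1 := by simpa [hLc, h0 c hc] using (hk hc).symm
  simpa [hk1] using hk

lemma eqOn_norm_mul_exp_of_hasDerivAt_im_div {s : Set ℝ} {z z' : ℝ → ℂ} {α : ℝ → ℝ} {c : ℝ}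
    (hs : IsOpen s) (hsc : IsPreconnected s) (hz : ∀ t ∈ s, HasDerivAt z (z' t) t)
    (h0 : ∀ t ∈ s, z t ≠ 0) (hα : ∀ t ∈ s, HasDerivAt α (z' t / z t).im t) (hc : c ∈ s)
    (hαc : ‖z c‖ * exp (α c * I) = z c) :
    s.EqOn z fun t ↦ ‖z t‖ * exp (α t * I) := by
  have hexp (t : ℝ) (ht : t ∈ s) :
      exp (Real.log ‖z t‖ + α t * I) = ‖z t‖ * exp (α t * I) := by
    rw [exp_add, ← ofReal_exp, Real.exp_log (norm_pos_iff.2 (h0 t ht))]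
  have hlog (t : ℝ) (ht : t ∈ s) :
      HasDerivAt (fun x ↦ (Real.log ‖z x‖ + α x * I : ℂ)) (z' t / z t) t := by
    rw [← re_add_im (z' t / z t)]
    exact (hasDerivAt_log_norm (hz t ht) (h0 t ht)).ofReal_comp.add
      ((hα t ht).ofReal_comp.mul_const I)
  exact (eqOn_exp_of_hasDerivAt_div hs hsc hz h0 hlog hc ((hexp c hc).trans hαc)).trans hexp

end Logarithm

section PolarAngle

variable {s : Set ℝ} {u v : ℝ → ℝ}

lemma hasDerivAt_complex_mk {u' v' t : ℝ} (hu : HasDerivAt u u' t) (hv : HasDerivAt v v' t) :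
    HasDerivAt (fun x ↦ (⟨u x, v x⟩ : ℂ)) ⟨u', v'⟩ t := by
  simpa only [Complex.mk_eq_add_mul_I] using
    hu.ofReal_comp.fun_add (hv.ofReal_comp.mul_const Complex.I)

lemma im_mk_div_mk (x y x' y' : ℝ) :
    ((⟨x', y'⟩ : ℂ) / ⟨x, y⟩).im = (x * y' - y * x') / (x ^ 2 + y ^ 2) := by
  rw [Complex.div_im, Complex.normSq_mk]
  ring

lemma exists_contDiffOn_polarAngle (hs : IsOpen s) (hsc : IsPreconnected s)
    (hu : DifferentiableOn ℝ u s) (hv : DifferentiableOn ℝ v s)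
    (h0 : ∀ t ∈ s, u t ^ 2 + v t ^ 2 ≠ 0)
    (hW : ContinuousOn (fun t ↦ u t * deriv v t - v t * deriv u t) s) :
    ∃ α : ℝ → ℝ, ContDiffOn ℝ 1 α s ∧ ∀ t ∈ s,
      deriv α t = (u t * deriv v t - v t * deriv u t) / (u t ^ 2 + v t ^ 2) ∧
      u t = √(u t ^ 2 + v t ^ 2) * Real.cos (α t) ∧
      v t = √(u t ^ 2 + v t ^ 2) * Real.sin (α t) := by
  obtain rfl | ⟨c, hc⟩ := s.eq_empty_or_nonempty
  · exact ⟨0, by simp, by simp⟩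
  let z (t : ℝ) : ℂ := ⟨u t, v t⟩
  have hz (t : ℝ) (ht : t ∈ s) : HasDerivAt z ⟨deriv u t, deriv v t⟩ t :=
    hasDerivAt_complex_mk (hu.differentiableAt (hs.mem_nhds ht)).hasDerivAt
      (hv.differentiableAt (hs.mem_nhds ht)).hasDerivAt
  have hz0 (t : ℝ) (ht : t ∈ s) : z t ≠ 0 := fun h ↦ h0 t ht <| by
    simp [show u t = 0 from congrArg Complex.re h, show v t = 0 from congrArg Complex.im h]
  have hrate := hW.div ((hu.continuousOn.pow 2).add (hv.continuousOn.pow 2)) h0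
  obtain ⟨α, hαc, hα⟩ :=
    exists_forall_hasDerivAt_of_continuousOn hs hsc hrate hc (Complex.arg (z c))
  have hαz (t : ℝ) (ht : t ∈ s) :
      HasDerivAt α ((⟨deriv u t, deriv v t⟩ : ℂ) / z t).im t := by
    rw [im_mk_div_mk]
    exact hα t ht
  have hzc : ‖z c‖ * Complex.exp (α c * Complex.I) = z c := by
    rw [hαc, Complex.norm_mul_exp_arg_mul_I]
  have hpolar := eqOn_norm_mul_exp_of_hasDerivAt_im_div hs hsc hz hz0 hαz hc hzc
  have hnorm (t : ℝ) : ‖z t‖ = √(u t ^ 2 + v t ^ 2) := Complex.norm_eq_sqrt_sq_add_sq _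
  refine ⟨α, contDiffOn_one_of_hasDerivAt hs hα hrate, fun t ht ↦ ⟨(hα t ht).deriv, ?_, ?_⟩⟩
  · simpa only [Complex.re_ofReal_mul, Complex.exp_ofReal_mul_I_re, hnorm] using
      congrArg Complex.re (hpolar ht)
  · simpa only [Complex.im_ofReal_mul, Complex.exp_ofReal_mul_I_im, hnorm] using
      congrArg Complex.im (hpolar ht)

end PolarAngle

lemma sq_add_sq_pos_of_mul_sub_mul_ne_zero {x y x' y' : ℝ} (h : x * y' - y * x' ≠ 0) :
    0 < x ^ 2 + y ^ 2 := by
  have hxy : x ≠ 0 ∨ y ≠ 0 := by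
    by_contra! h0
    simp [h0.1, h0.2] at h
  rcases hxy with hx | hy <;> positivity

lemma sqrt_mul_div_sqrt_div {a : ℝ} (ha : 0 < a) (r x : ℝ) :
    √a * (x / √(a / r)) = √r * x := by
  rw [Real.sqrt_div ha.le, div_div_eq_mul_div, mul_div_cancel₀ _ (Real.sqrt_ne_zero'.2 ha),
    mul_comm]

theorem exists_phase_function_general {s : Set ℝ} {u v W : ℝ → ℝ} (hs : IsOpen s)
    (hsc : IsPreconnected s) (hu : DifferentiableOn ℝ u s) (hv : DifferentiableOn ℝ v s)
    (hwron : ∀ t ∈ s, u t * deriv v t - v t * deriv u t = W t)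
    (hW : ContinuousOn W s) (hWpos : ∀ t ∈ s, 0 < W t) :
    ∃ α : ℝ → ℝ, ContDiffOn ℝ 1 α s ∧ ∀ t ∈ s,
      deriv α t = W t / (u t ^ 2 + v t ^ 2) ∧
      0 < deriv α t ∧
      u t = √(W t) * (Real.cos (α t) / √(deriv α t)) ∧
      v t = √(W t) * (Real.sin (α t) / √(deriv α t)) := by
  have hpos (t : ℝ) (ht : t ∈ s) : 0 < u t ^ 2 + v t ^ 2 :=
    sq_add_sq_pos_of_mul_sub_mul_ne_zero (hwron t ht ▸ (hWpos t ht).ne')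
  obtain ⟨α, hα, hpolar⟩ := exists_contDiffOn_polarAngle hs hsc hu hv
    (fun t ht ↦ (hpos t ht).ne') (hW.congr hwron)
  refine ⟨α, hα, fun t ht ↦ ?_⟩
  obtain ⟨hderiv, hut, hvt⟩ := hpolar t ht
  rw [hderiv, hwron t ht, sqrt_mul_div_sqrt_div (hWpos t ht), sqrt_mul_div_sqrt_div (hWpos t ht)]
  exact ⟨rfl, div_pos (hWpos t ht) (hpos t ht), hut, hvt⟩

/-- Existence of a phase function: if `u, v` are twice continuously
differentiable solutions of `y'' + q·y = 0` on the open interval `(a,b)` with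
constant Wronskian `W > 0`, then there is a continuously differentiable `α` with
`α' = W/(u² + v²) > 0`, `u = √W · cos(α)/√(α')` and `v = √W · sin(α)/√(α')`. -/
theorem exists_phase_function (a b W : ℝ) (hW : 0 < W) (q u v : ℝ → ℝ)
    (hq : ContinuousOn q (Set.Ioo a b))
    (hu : ContDiffOn ℝ 2 u (Set.Ioo a b))
    (hv : ContDiffOn ℝ 2 v (Set.Ioo a b))
    (hueq : ∀ t ∈ Set.Ioo a b, deriv (deriv u) t + q t * u t = 0)
    (hveq : ∀ t ∈ Set.Ioo a b, deriv (deriv v) t + q t * v t = 0)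
    (hwron : ∀ t ∈ Set.Ioo a b, u t * deriv v t - v t * deriv u t = W) :
    ∃ α : ℝ → ℝ, ContDiffOn ℝ 1 α (Set.Ioo a b) ∧
      ∀ t ∈ Set.Ioo a b,
        deriv α t = W / ((u t) ^ 2 + (v t) ^ 2) ∧
        0 < deriv α t ∧
        u t = Real.sqrt W * (Real.cos (α t) / Real.sqrt (deriv α t)) ∧
        v t = Real.sqrt W * (Real.sin (α t) / Real.sqrt (deriv α t)) :=
  exists_phase_function_general isOpen_Ioo isPreconnected_Ioo (hu.differentiableOn two_ne_zero)
    (hv.differentiableOn two_ne_zero) hwron continuousOn_const fun _ _ ↦ hW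
end

section
/- Let n and m be integers with 0 ≤ m ≤ n, and let P_n denote the Legendre polynomial of degree n given by Rodrigues' formula P_n(x) = (1/(2ⁿ·n!)) · dⁿ/dxⁿ [(x² − 1)ⁿ]. Let P_n^{(m)} denote the m-th derivative of P_n. Then the function y(t) = (sin t)^m · P_n^{(m)}(cos t) · √(sin t) satisfies the differential equation y''(t) + ((n + 1/2)² − (m² − 1/4)·csc²(t))·y(t) = 0 for all t ∈ (0, π). -/
/-!
Differentiating `(X² - 1) u' = 2nX u`, where `u = (X² - 1)ⁿ`, gives a second-order equation of
hypergeometric type `σ p'' + τ p' + c p = 0` with `deg σ ≤ 2`, `deg τ ≤ 1` and `c` constant. Such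
equations are stable under differentiation: `n` derivatives lead to Legendre's equation for `Pₙ`,
and `m` more to a Gegenbauer equation for `w = Pₙ⁽ᵐ⁾`. In the variable `x = cos t`, multiplication
by `(sin t) ^ (m + 1/2)` is the Liouville transformation removing the first-order term of that
equation.
-/

open Polynomial Topology

theorem two_mul_cast_choose_two {R : Type*} [Ring R] (n : ℕ) :
    2 * (n.choose 2 : R) = n * (n - 1) := by
  rw [← Nat.cast_descFactorial_two, Nat.descFactorial_eq_factorial_mul_choose, Nat.factorial_two,
    Nat.cast_mul, Nat.cast_ofNat]

section HypergeometricType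

variable {R : Type*} [CommRing R]

theorem iterate_derivative_of_hypergeometricType {σ τ p : R[X]} {c : R}
    (hσ : σ.natDegree ≤ 2) (hτ : τ.natDegree ≤ 1)
    (hp : σ * derivative^[2] p + τ * derivative p + C c * p = 0) (k : ℕ) :
    σ * derivative^[k + 2] p + (τ + k * derivative σ) * derivative^[k + 1] p +
      (C c + k * derivative τ + k.choose 2 * derivative^[2] σ) * derivative^[k] p = 0 := by
  have hσ' : derivative (derivative (derivative σ)) = 0 :=
    iterate_derivative_eq_zero (x := 3) (by lia)
  have hτ' : derivative (derivative τ) = 0 := iterate_derivative_eq_zero (x := 2) (by lia)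
  simp only [Function.iterate_succ_apply', Function.iterate_zero_apply] at hp ⊢
  induction k with
  | zero => simpa using hp
  | succ k ih =>
    have hderiv := congrArg derivative ih
    simp only [derivative_add, derivative_mul, derivative_C, derivative_natCast, derivative_zero,
      hσ', hτ'] at hderiv
    simp only [Function.iterate_succ_apply', Nat.choose_succ_succ' k 1, Nat.choose_one_right]
    push_cast
    linear_combination hderiv

theorem iterate_derivative_of_gegenbauer_ode {p : R[X]} {a c : R}
    (hp : (X ^ 2 - 1) * derivative^[2] p + C a * X * derivative p + C c * p = 0) (k : ℕ) :
    (X ^ 2 - 1) * derivative^[k + 2] p + C (a + 2 * k) * X * derivative^[k + 1] p +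
      C (c + k * a + k * (k - 1)) * derivative^[k] p = 0 := by
  have hode := iterate_derivative_of_hypergeometricType (by compute_degree) (by compute_degree) hp k
  have hσ : derivative (X ^ 2 - 1 : R[X]) = 2 * X := by
    rw [derivative_sub, derivative_X_sq, derivative_one, sub_zero, map_ofNat]
  have hσ' : derivative^[2] (X ^ 2 - 1 : R[X]) = 2 := by
    rw [Function.iterate_succ_apply, hσ]
    simp
  have hτ : derivative (C a * X) = C a := by simp
  rw [hσ, hσ', hτ] at hode
  simp only [map_add, map_sub, map_mul, map_natCast, map_one, map_ofNat]
  linear_combination hode - derivative^[k] p * two_mul_cast_choose_two (R := R[X]) k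

theorem X_sq_sub_one_mul_derivative_X_sq_sub_one_pow (n : ℕ) :
    ((X : R[X]) ^ 2 - 1) * derivative ((X ^ 2 - 1) ^ n) =
      2 * (n : R[X]) * X * (X ^ 2 - 1) ^ n := by
  cases n with
  | zero => simp
  | succ n =>
    simp only [derivative_pow_succ, derivative_sub, derivative_X, derivative_one, map_add,
      map_natCast, map_one, Nat.cast_add_one]
    ring

theorem X_sq_sub_one_pow_ode (n : ℕ) :
    ((X : R[X]) ^ 2 - 1) * derivative^[2] ((X ^ 2 - 1) ^ n) +
      C (2 * (1 - n) : R) * X * derivative ((X ^ 2 - 1) ^ n) +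
      C (-(2 * n) : R) * (X ^ 2 - 1) ^ n = 0 := by
  have hderiv := congrArg derivative (X_sq_sub_one_mul_derivative_X_sq_sub_one_pow (R := R) n)
  simp only [derivative_mul, derivative_sub, derivative_X_sq, derivative_X, derivative_one,
    derivative_ofNat, derivative_natCast] at hderiv
  simp only [Function.iterate_succ_apply', Function.iterate_zero_apply, map_neg, map_sub, map_mul,
    map_natCast, map_one, map_ofNat] at hderiv ⊢
  linear_combination hderiv

theorem iterate_derivative_X_sq_sub_one_pow_legendre_ode (n : ℕ) :
    ((X : R[X]) ^ 2 - 1) * derivative^[n + 2] ((X ^ 2 - 1) ^ n) +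
      C 2 * X * derivative^[n + 1] ((X ^ 2 - 1) ^ n) +
      C (-(n * (n + 1)) : R) * derivative^[n] ((X ^ 2 - 1) ^ n) = 0 := by
  convert iterate_derivative_of_gegenbauer_ode (X_sq_sub_one_pow_ode n) n using 3
  all_goals ring_nf

end HypergeometricType

section LegendrePolynomial

/-- The Legendre polynomial `Pₙ`, defined by Rodrigues' formula. If `2 ^ n * n!` vanishes in `K`,
which requires positive characteristic, division by zero makes this the zero polynomial. -/
noncomputable def legendrePolynomial (K : Type*) [Field K] (n : ℕ) : K[X] :=
  C (1 / (2 ^ n * (n.factorial : K))) * derivative^[n] ((X ^ 2 - 1) ^ n)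

theorem legendrePolynomial_ode (K : Type*) [Field K] (n : ℕ) :
    (X ^ 2 - 1) * derivative^[2] (legendrePolynomial K n) +
      C 2 * X * derivative (legendrePolynomial K n) +
      C (-(n * (n + 1)) : K) * legendrePolynomial K n = 0 := by
  have hode := iterate_derivative_X_sq_sub_one_pow_legendre_ode (R := K) n
  simp only [legendrePolynomial, iterate_derivative_C_mul, derivative_C_mul]
  simp only [Function.iterate_succ_apply', Function.iterate_zero_apply] at hode ⊢
  linear_combination C (1 / (2 ^ n * (n.factorial : K))) * hode

theorem iterate_derivative_legendrePolynomial_ode (K : Type*) [Field K] (n m : ℕ) :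
    (X ^ 2 - 1) * derivative^[m + 2] (legendrePolynomial K n) +
      C (2 * (m + 1) : K) * X * derivative^[m + 1] (legendrePolynomial K n) +
      C (m * (m + 1) - n * (n + 1) : K) * derivative^[m] (legendrePolynomial K n) = 0 := by
  convert iterate_derivative_of_gegenbauer_ode (legendrePolynomial_ode K n) m using 3
  all_goals ring_nf

variable {𝕜 : Type*} [NontriviallyNormedField 𝕜]

theorem iteratedDeriv_polynomial_eval (p : 𝕜[X]) (k : ℕ) :
    iteratedDeriv k p.eval = (derivative^[k] p).eval := by
  induction k with
  | zero => simp
  | succ k ih =>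
    ext x
    rw [iteratedDeriv_succ, ih, Polynomial.deriv, Function.iterate_succ_apply']

theorem eval_legendrePolynomial (n : ℕ) (x : 𝕜) :
    (legendrePolynomial 𝕜 n).eval x =
      1 / (2 ^ n * (n.factorial : 𝕜)) * iteratedDeriv n (fun s : 𝕜 => (s ^ 2 - 1) ^ n) x := by
  have heval : (fun s : 𝕜 => (s ^ 2 - 1) ^ n) = ((X ^ 2 - 1 : 𝕜[X]) ^ n).eval := by
    ext s
    simp
  rw [heval, iteratedDeriv_polynomial_eval, legendrePolynomial, eval_mul, eval_C]

end LegendrePolynomial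

section LiouvilleTransformation

open Real

variable {w w' : ℝ → ℝ} {w'' t : ℝ}

theorem hasDerivAt_sin_rpow_mul_comp_cos (α : ℝ) {dw : ℝ} (ht : 0 < sin t)
    (hw : HasDerivAt w dw (cos t)) :
    HasDerivAt (fun u => sin u ^ α * w (cos u))
      (α * (sin t ^ (α - 1) * (cos t * w (cos t))) - sin t ^ (α + 1) * dw) t := by
  refine (((hasDerivAt_sin t).rpow_const (.inl ht.ne')).fun_mul
    (hw.comp t (hasDerivAt_cos t))).congr_deriv ?_
  rw [Function.comp_apply, rpow_add_one ht.ne']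
  ring

theorem deriv_deriv_sin_rpow_mul_comp_cos (α : ℝ) (ht : 0 < sin t)
    (hw : ∀ᶠ x in 𝓝 (cos t), HasDerivAt w (w' x) x) (hw' : HasDerivAt w' w'' (cos t)) :
    deriv (deriv fun u => sin u ^ α * w (cos u)) t =
      sin t ^ α * ((1 - cos t ^ 2) * w'' - (2 * α + 1) * cos t * w' (cos t) - α ^ 2 * w (cos t) +
        α * (α - 1) * (1 / sin t) ^ 2 * w (cos t)) := by
  have hfirst : deriv (fun u => sin u ^ α * w (cos u)) =ᶠ[𝓝 t] fun u =>
      α * (sin u ^ (α - 1) * (cos u * w (cos u))) - sin u ^ (α + 1) * w' (cos u) := by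
    filter_upwards [continuous_sin.continuousAt.eventually_const_lt ht,
      continuous_cos.continuousAt.eventually hw] with u hu hwu
    exact (hasDerivAt_sin_rpow_mul_comp_cos α hu hwu).deriv
  -- Both terms of the first derivative have the form `sin u ^ β * v (cos u)` again.
  have hsecond :=
    ((hasDerivAt_sin_rpow_mul_comp_cos (α - 1) ht
      ((hasDerivAt_id' (cos t)).fun_mul hw.self_of_nhds)).const_mul α).fun_sub
    (hasDerivAt_sin_rpow_mul_comp_cos (α + 1) ht hw')
  rw [hfirst.deriv_eq, hsecond.deriv]
  simp only [rpow_add_one ht.ne', rpow_sub_one ht.ne', add_sub_cancel_right, sub_add_cancel]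
  linear_combination (norm := (field_simp; ring))
    sin t ^ α * (w'' + α * (α - 1) * w (cos t) / sin t ^ 2) * sin_sq_add_cos_sq t

theorem sin_rpow_mul_comp_cos_ode {α κ : ℝ} (ht : 0 < sin t)
    (hw : ∀ᶠ x in 𝓝 (cos t), HasDerivAt w (w' x) x) (hw' : HasDerivAt w' w'' (cos t))
    (hode : (1 - cos t ^ 2) * w'' - (2 * α + 1) * cos t * w' (cos t) +
      (κ - α ^ 2) * w (cos t) = 0) :
    deriv (deriv fun u => sin u ^ α * w (cos u)) t +
      (κ - α * (α - 1) * (1 / sin t) ^ 2) * (sin t ^ α * w (cos t)) = 0 := by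
  rw [deriv_deriv_sin_rpow_mul_comp_cos α ht hw hw']
  linear_combination sin t ^ α * hode

end LiouvilleTransformation

/-- For integers `0 ≤ m ≤ n`, the function
`y(t) = (sin t)^m · P_n^{(m)}(cos t) · √(sin t)`, where `P_n` is the Legendre
polynomial given by Rodrigues' formula and `P_n^{(m)}` is its `m`-th
derivative, satisfies the associated Legendre differential equation
`y'' + ((n + 1/2)² − (m² − 1/4)·csc²(t))·y = 0` on `(0, π)`. -/
theorem associated_legendre_ode (n m : ℕ) (hmn : m ≤ n) (P y : ℝ → ℝ)
    (hP : ∀ x : ℝ, P x = 1 / (2 ^ n * (n.factorial : ℝ)) *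
      iteratedDeriv n (fun s : ℝ => (s ^ 2 - 1) ^ n) x)
    (hy : ∀ t : ℝ, y t =
      (Real.sin t) ^ m * iteratedDeriv m P (Real.cos t) * Real.sqrt (Real.sin t)) :
    ∀ t ∈ Set.Ioo 0 Real.pi,
      deriv (deriv y) t +
        (((n : ℝ) + 1 / 2) ^ 2 -
          ((m : ℝ) ^ 2 - 1 / 4) * (1 / Real.sin t) ^ 2) * y t = 0 := by
  intro t ht
  have hsin : 0 < Real.sin t := Real.sin_pos_of_mem_Ioo ht
  have hP_eval : P = (legendrePolynomial ℝ n).eval :=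
    funext fun x => (hP x).trans (eval_legendrePolynomial n x).symm
  set w : ℝ[X] := derivative^[m] (legendrePolynomial ℝ n) with hw
  have hy_rpow : y =ᶠ[𝓝 t] fun u => Real.sin u ^ (m + 1 / 2 : ℝ) * w.eval (Real.cos u) := by
    filter_upwards [Real.continuous_sin.continuousAt.eventually_const_lt hsin] with u hu
    rw [hy, hP_eval, iteratedDeriv_polynomial_eval, Real.rpow_add hu, Real.rpow_natCast,
      Real.sqrt_eq_rpow]
    ring
  have hode := congrArg (eval (Real.cos t)) (iterate_derivative_legendrePolynomial_ode ℝ n m)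
  simp only [Function.iterate_succ_apply', ← hw, eval_add, eval_sub, eval_mul, eval_pow, eval_X,
    eval_C, eval_one, eval_zero] at hode
  rw [hy_rpow.deriv.deriv_eq, hy_rpow.self_of_nhds,
    ← sin_rpow_mul_comp_cos_ode (α := m + 1 / 2) (κ := (n + 1 / 2) ^ 2) hsin
      (.of_forall w.hasDerivAt) (w.derivative.hasDerivAt _) (by linear_combination -hode)]
  ring
end
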